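/- Let (X,f) be a TDS with ψ ∈ C(X,ℝ), ψ > 0, and let m = min ψ, M = ‖ψ‖. Then P_ψ(0) = dim_BS X, i.e., the ψ-induced topological pressure of the zero function equals the Barreira–Schmeling dimension of X with respect to ψ. -/

import Mathlib

open MeasureTheory Filter Topology Set

variable {X : Type*}

/-- Birkhoff sum `S_n φ (x) = ∑_{i<n} φ(f^i x)`. -/
noncomputable def birkhoff (f : X → X) (φ : X → ℝ) (n : ℕ) (x : X) : ℝ :=
  ∑ i ∈ Finset.range n, φ (f^[i] x)

/-- The `n`-th Bowen metric. -/
noncomputable def dynDist [MetricSpace X] (f : X → X) (n : ℕ) (x y : X) : ℝ :=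
  ⨆ i : Fin n, dist (f^[(i : ℕ)] x) (f^[(i : ℕ)] y)

/-- `F` is an `(n,ε)`-spanning set of `Z`. -/
def IsSpanningSet [MetricSpace X] (f : X → X) (n : ℕ) (ε : ℝ) (Z : Set X) (F : Finset X) : Prop :=
  ∀ y ∈ Z, ∃ x ∈ F, dynDist f n x y ≤ ε

/-- `E` is `(n,ε)`-separated. -/
def IsSeparatedSet [MetricSpace X] (f : X → X) (n : ℕ) (ε : ℝ) (E : Finset X) : Prop :=
  ∀ x ∈ E, ∀ y ∈ E, x ≠ y → ε < dynDist f n x y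

/-- `S_T = {n : ∃ x, S_n ψ(x) ≤ T < S_{n+1} ψ(x)}`. -/
def STset (f : X → X) (ψ : X → ℝ) (T : ℝ) : Set ℕ :=
  {n | ∃ x : X, birkhoff f ψ n x ≤ T ∧ T < birkhoff f ψ (n + 1) x}

/-- `X_n = {x : S_n ψ(x) ≤ T < S_{n+1} ψ(x)}`. -/
def Xset (f : X → X) (ψ : X → ℝ) (T : ℝ) (n : ℕ) : Set X :=
  {x | birkhoff f ψ n x ≤ T ∧ T < birkhoff f ψ (n + 1) x}

/-- `Q_{ψ,T}(f,φ,ε)`, the spanning-set quantity. -/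
noncomputable def Qspan [MetricSpace X] (f : X → X) (φ ψ : X → ℝ) (T ε : ℝ) : ℝ :=
  sInf { r : ℝ | ∃ F : ℕ → Finset X,
    (∀ n ∈ STset f ψ T, IsSpanningSet f n ε (Xset f ψ T n) (F n)) ∧
    r = ∑' n : ℕ, Set.indicator (STset f ψ T)
        (fun n => ∑ x ∈ F n, Real.exp (birkhoff f φ n x)) n }

/-- `P_{ψ,T}(f,φ,ε)`, the separated-set quantity. -/
noncomputable def Psep [MetricSpace X] (f : X → X) (φ ψ : X → ℝ) (T ε : ℝ) : ℝ :=
  sSup { r : ℝ | ∃ E : ℕ → Finset X,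
    (∀ n ∈ STset f ψ T, (E n : Set X) ⊆ Xset f ψ T n ∧ IsSeparatedSet f n ε (E n)) ∧
    r = ∑' n : ℕ, Set.indicator (STset f ψ T)
        (fun n => ∑ x ∈ E n, Real.exp (birkhoff f φ n x)) n }

/-- The `ψ`-induced topological pressure of `φ`. -/
noncomputable def inducedPressure [MetricSpace X] (f : X → X) (φ ψ : X → ℝ) : EReal :=
  ⨆ (ε : ℝ) (_ : 0 < ε),
    Filter.limsup (fun T : ℝ => ((T⁻¹ * Real.log (Qspan f φ ψ T ε) : ℝ) : EReal)) atTop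

/-- Largest sum over `(n,ε)`-separated sets of `X`. -/
noncomputable def sepSum [MetricSpace X] (f : X → X) (φ : X → ℝ) (n : ℕ) (ε : ℝ) : ℝ :=
  sSup { r : ℝ | ∃ E : Finset X, IsSeparatedSet f n ε E ∧
    r = ∑ x ∈ E, Real.exp (birkhoff f φ n x) }

/-- The classical (Walters) topological pressure. -/
noncomputable def topPressure [MetricSpace X] (f : X → X) (φ : X → ℝ) : EReal :=
  ⨆ (ε : ℝ) (_ : 0 < ε),
    Filter.limsup (fun n : ℕ => (((n : ℝ)⁻¹ * Real.log (sepSum f φ n ε) : ℝ) : EReal)) atTop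

/-- Open Bowen ball of order `n` and radius `ε`. -/
def BowenBall [MetricSpace X] (f : X → X) (n : ℕ) (x : X) (ε : ℝ) : Set X :=
  {y | dynDist f n x y < ε}

/-- `M(α,ε,N)`: Barreira–Schmeling outer-measure approximation, the infimum over finite
covers of `X` by Bowen balls of order `≥ N` of `∑_B exp(-α ψ(B))`, where
`ψ(B) = sup_{y ∈ B} S_nψ(y)`. A cover is encoded as a finite set of pairs `(n, x)`. -/
noncomputable def BSpre [MetricSpace X] (f : X → X) (ψ : X → ℝ) (α ε : ℝ) (N : ℕ) : ENNReal :=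
  ⨅ (G : Finset (ℕ × X))
    (_ : (∀ p ∈ G, N ≤ p.1) ∧ Set.univ ⊆ ⋃ p ∈ G, BowenBall f p.1 p.2 ε),
    ∑ p ∈ G, ENNReal.ofReal
      (Real.exp (-α * sSup (birkhoff f ψ p.1 '' BowenBall f p.1 p.2 ε)))

/-- `m(α,ε) = lim_{N→∞} M(α,ε,N)` (the approximations increase in `N`). -/
noncomputable def BSm [MetricSpace X] (f : X → X) (ψ : X → ℝ) (α ε : ℝ) : ENNReal :=
  ⨆ N : ℕ, BSpre f ψ α ε N

/-- `dim_BS(X,ε) = inf {α : m(α,ε) = 0}`. -/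
noncomputable def BSdimAt [MetricSpace X] (f : X → X) (ψ : X → ℝ) (ε : ℝ) : ℝ :=
  sInf {α : ℝ | BSm f ψ α ε = 0}

/-- The Barreira–Schmeling dimension `dim_BS X = lim_{ε→0} dim_BS(X,ε)`
(the quantity increases as `ε` decreases). -/
noncomputable def BSdim [MetricSpace X] (f : X → X) (ψ : X → ℝ) : EReal :=
  ⨆ (ε : ℝ) (_ : 0 < ε), ((BSdimAt f ψ ε : ℝ) : EReal)

section Orbits

variable {f : X → X} {ψ : X → ℝ}

lemma birkhoff_add (f : X → X) (ψ : X → ℝ) (a b : ℕ) (x : X) :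
    birkhoff f ψ (a + b) x = birkhoff f ψ a x + birkhoff f ψ b (f^[a] x) := by
  unfold birkhoff
  rw [Finset.sum_range_add]
  congr 1
  refine Finset.sum_congr rfl fun i _ => ?_
  rw [← Function.iterate_add_apply, add_comm]

lemma mul_le_birkhoff {m : ℝ} (hm : ∀ x, m ≤ ψ x) (n : ℕ) (x : X) :
    n * m ≤ birkhoff f ψ n x := by
  simpa [birkhoff] using Finset.card_nsmul_le_sum (Finset.range n) (fun i => ψ (f^[i] x)) m
    fun i _ => hm _

lemma birkhoff_le_mul {M : ℝ} (hM : ∀ x, ψ x ≤ M) (n : ℕ) (x : X) :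
    birkhoff f ψ n x ≤ n * M := by
  simpa [birkhoff] using Finset.sum_le_card_nsmul (Finset.range n) (fun i => ψ (f^[i] x)) M
    fun i _ => hM _

lemma natCast_mul_le_of_mem_STset {m T : ℝ} (hm : ∀ x, m ≤ ψ x) {n : ℕ} (hn : n ∈ STset f ψ T) :
    n * m ≤ T := by
  obtain ⟨x, hx, -⟩ := hn
  exact (mul_le_birkhoff hm n x).trans hx

lemma STset_subset_range {m T : ℝ} (hm0 : 0 < m) (hm : ∀ x, m ≤ ψ x) :
    STset f ψ T ⊆ Finset.range (⌊T / m⌋₊ + 1) := by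
  intro n hn
  have h := natCast_mul_le_of_mem_STset hm hn
  rw [Finset.coe_range, mem_Iio, Nat.lt_succ_iff]
  exact Nat.le_floor ((le_div_iff₀ hm0).2 h)

lemma exists_mem_Xset {m T : ℝ} (hm0 : 0 < m) (hm : ∀ x, m ≤ ψ x) (hT : 0 ≤ T) (x : X) :
    ∃ n, x ∈ Xset f ψ T n := by
  classical
  have hex : ∃ k, T < birkhoff f ψ k x := by
    obtain ⟨k, hk⟩ := exists_nat_gt (T / m)
    exact ⟨k, ((div_lt_iff₀ hm0).1 hk).trans_le (mul_le_birkhoff hm k x)⟩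
  have h0 : Nat.find hex ≠ 0 := by
    intro h
    have := Nat.find_spec hex
    rw [h] at this
    simp only [birkhoff, Finset.range_zero, Finset.sum_empty] at this
    linarith
  obtain ⟨n, hn⟩ := Nat.exists_eq_succ_of_ne_zero h0
  refine ⟨n, not_lt.1 (Nat.find_min hex (m := n) (by omega)), ?_⟩
  have := Nat.find_spec hex
  rwa [hn] at this

lemma tsum_indicator_card {T : ℝ} (hfin : (STset f ψ T).Finite) (F : ℕ → Finset X) :
    ∑' n : ℕ, Set.indicator (STset f ψ T)
      (fun n => ∑ x ∈ F n, Real.exp (birkhoff f (fun _ => 0) n x)) n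
      = ∑ n ∈ hfin.toFinset, ((F n).card : ℝ) := by
  rw [tsum_eq_sum (s := hfin.toFinset)]
  · refine Finset.sum_congr rfl fun n hn => ?_
    rw [Set.indicator_of_mem (hfin.mem_toFinset.1 hn)]
    simp [birkhoff]
  · intro n hn
    exact Set.indicator_of_notMem (fun h => hn (hfin.mem_toFinset.2 h)) _

end Orbits

section BowenBalls

variable [MetricSpace X] {f : X → X} {ψ : X → ℝ}

lemma birkhoff_le_add {δ v : ℝ} (hv : ∀ a b, dist a b ≤ δ → ψ a ≤ ψ b + v) {n : ℕ} {x y : X}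
    (h : ∀ i < n, dist (f^[i] x) (f^[i] y) ≤ δ) :
    birkhoff f ψ n x ≤ birkhoff f ψ n y + n * v := by
  have : birkhoff f ψ n x ≤ ∑ i ∈ Finset.range n, (ψ (f^[i] y) + v) :=
    Finset.sum_le_sum fun i hi => hv _ _ (h i (Finset.mem_range.1 hi))
  simpa [birkhoff, Finset.sum_add_distrib] using this

lemma dist_iterate_le_dynDist {n i : ℕ} (hi : i < n) (x y : X) :
    dist (f^[i] x) (f^[i] y) ≤ dynDist f n x y :=
  le_ciSup (f := fun i : Fin n => dist (f^[(i : ℕ)] x) (f^[(i : ℕ)] y))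
    (Set.finite_range _).bddAbove ⟨i, hi⟩

lemma dynDist_le {n : ℕ} {δ : ℝ} (hδ : 0 ≤ δ) {x y : X}
    (h : ∀ i < n, dist (f^[i] x) (f^[i] y) ≤ δ) : dynDist f n x y ≤ δ :=
  Real.iSup_le (fun i => h i i.2) hδ

lemma self_mem_bowenBall (n : ℕ) (x : X) {ε : ℝ} (hε : 0 < ε) : x ∈ BowenBall f n x ε :=
  (dynDist_le le_rfl fun i _ => by simp).trans_lt hε

lemma dist_iterate_le_of_mem_bowenBall {n i : ℕ} (hi : i < n) {c x y : X} {ε : ℝ}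
    (hx : x ∈ BowenBall f n c ε) (hy : y ∈ BowenBall f n c ε) :
    dist (f^[i] x) (f^[i] y) ≤ 2 * ε := by
  have h₁ := (dist_iterate_le_dynDist hi c x).trans_lt hx
  have h₂ := (dist_iterate_le_dynDist hi c y).trans_lt hy
  have := dist_triangle_left (f^[i] x) (f^[i] y) (f^[i] c)
  linarith

/-- A finite cover by Bowen balls with `∑ exp (-α ψ(B)) ≤ 1` can be iterated along orbits to give
covers of the sublevel sets of the Birkhoff sums by few sets of small Bowen diameter. -/
lemma exists_cover_sublevel {G : Finset (ℕ × X)} {α ε v C : ℝ} (hε : 0 < ε) (hα : 0 ≤ α)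
    (h0 : ∀ x, 0 ≤ ψ x) (hv0 : 0 ≤ v) (hv : ∀ a b, dist a b ≤ 2 * ε → ψ a ≤ ψ b + v)
    (hG : ∀ p ∈ G, 1 ≤ p.1) (hcov : ∀ x, ∃ p ∈ G, x ∈ BowenBall f p.1 p.2 ε)
    (hC : ∀ p ∈ G, sSup (birkhoff f ψ p.1 '' BowenBall f p.1 p.2 ε) ≤ C)
    (hsum : ∑ p ∈ G, Real.exp (-α * sSup (birkhoff f ψ p.1 '' BowenBall f p.1 p.2 ε)) ≤ 1)
    (n : ℕ) : ∀ T : ℝ, ∃ U : Finset (Set X), (U.card : ℝ) ≤ Real.exp (α * (T + n * v + C)) ∧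
      (∀ x, birkhoff f ψ n x ≤ T → ∃ u ∈ U, x ∈ u) ∧
      ∀ u ∈ U, ∀ x ∈ u, ∀ y ∈ u, ∀ i < n, dist (f^[i] x) (f^[i] y) ≤ 2 * ε := by
  classical
  induction n using Nat.strong_induction_on with
  | _ n ih =>
  intro T
  rcases lt_or_ge T 0 with hT | hT
  · refine ⟨∅, by simpa using (Real.exp_pos _).le, fun x hx => ?_, by simp⟩
    have := mul_le_birkhoff (f := f) h0 n x
    linarith
  set s : ℕ × X → ℝ := fun p => sSup (birkhoff f ψ p.1 '' BowenBall f p.1 p.2 ε)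
  have key : ∀ p : ℕ × X, ∃ V : Finset (Set X), p ∈ G →
      (V.card : ℝ) ≤ Real.exp (α * (T + n * v + C)) * Real.exp (-α * s p) ∧
      (∀ x ∈ BowenBall f p.1 p.2 ε, birkhoff f ψ n x ≤ T → ∃ u ∈ V, x ∈ u) ∧
      ∀ u ∈ V, ∀ x ∈ u, ∀ y ∈ u, ∀ i < n, dist (f^[i] x) (f^[i] y) ≤ 2 * ε := by
    intro p
    by_cases hp : p ∈ G
    swap
    · exact ⟨∅, fun h => absurd h hp⟩
    rcases le_or_gt n p.1 with hn | hn
    · refine ⟨{BowenBall f p.1 p.2 ε}, fun _ => ⟨?_, ?_, ?_⟩⟩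
      · rw [← Real.exp_add]
        simp only [Finset.card_singleton, Nat.cast_one]
        apply Real.one_le_exp
        have h₁ : s p ≤ C := hC p hp
        have h₂ : 0 ≤ (n : ℝ) * v := by positivity
        have h₃ : 0 ≤ α * (T + n * v + (C - s p)) := mul_nonneg hα (by linarith)
        linarith
      · exact fun x hx _ => ⟨_, Finset.mem_singleton_self _, hx⟩
      · intro u hu x hx y hy i hi
        rw [Finset.mem_singleton] at hu
        subst hu
        exact dist_iterate_le_of_mem_bowenBall (hi.trans_le hn) hx hy
    · obtain ⟨k, rfl⟩ := Nat.exists_eq_add_of_lt hn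
      obtain ⟨U, hU, hUc, hUd⟩ := ih (k + 1) (by have := hG p hp; omega) (T - s p + p.1 * v)
      refine ⟨U.image fun u => BowenBall f p.1 p.2 ε ∩ f^[p.1] ⁻¹' u, fun _ => ⟨?_, ?_, ?_⟩⟩
      · refine (Nat.cast_le.2 Finset.card_image_le).trans (hU.trans_eq ?_)
        rw [← Real.exp_add]
        congr 1
        push_cast
        ring
      · intro x hx hxT
        have hle : s p ≤ birkhoff f ψ p.1 x + p.1 * v := by
          refine csSup_le ⟨_, mem_image_of_mem _ (self_mem_bowenBall _ _ hε)⟩ ?_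
          rintro _ ⟨y, hy, rfl⟩
          exact birkhoff_le_add hv fun i hi => dist_iterate_le_of_mem_bowenBall hi hy hx
        rw [add_assoc, birkhoff_add] at hxT
        obtain ⟨u, hu, hxu⟩ := hUc (f^[p.1] x) (by linarith)
        exact ⟨_, Finset.mem_image_of_mem _ hu, hx, hxu⟩
      · intro w hw x hx y hy i hi
        obtain ⟨u, hu, rfl⟩ := Finset.mem_image.1 hw
        rcases lt_or_ge i p.1 with hip | hip
        · exact dist_iterate_le_of_mem_bowenBall hip hx.1 hy.1
        · obtain ⟨j, rfl⟩ := Nat.exists_eq_add_of_le hip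
          rw [add_comm p.1 j, Function.iterate_add_apply, Function.iterate_add_apply]
          exact hUd u hu _ hx.2 _ hy.2 j (by omega)
  choose V hV using key
  refine ⟨G.biUnion V, ?_, ?_, ?_⟩
  · calc ((G.biUnion V).card : ℝ) ≤ ∑ p ∈ G, ((V p).card : ℝ) := by
          exact_mod_cast Finset.card_biUnion_le
      _ ≤ ∑ p ∈ G, Real.exp (α * (T + n * v + C)) * Real.exp (-α * s p) :=
          Finset.sum_le_sum fun p hp => (hV p hp).1
      _ ≤ Real.exp (α * (T + n * v + C)) := by
          rw [← Finset.mul_sum]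
          exact mul_le_of_le_one_right (Real.exp_pos _).le hsum
  · intro x hx
    obtain ⟨p, hp, hxp⟩ := hcov x
    obtain ⟨u, hu, hxu⟩ := (hV p hp).2.1 x hxp hx
    exact ⟨u, Finset.mem_biUnion.2 ⟨p, hp, hu⟩, hxu⟩
  · intro u hu
    obtain ⟨p, hp, hup⟩ := Finset.mem_biUnion.1 hu
    exact (hV p hp).2.2 u hup

lemma Qspan_zero_eq {T ε : ℝ} (hfin : (STset f ψ T).Finite) :
    Qspan f (fun _ => 0) ψ T ε = sInf {r : ℝ | ∃ F : ℕ → Finset X,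
      (∀ n ∈ STset f ψ T, IsSpanningSet f n ε (Xset f ψ T n) (F n)) ∧
      r = ∑ n ∈ hfin.toFinset, ((F n).card : ℝ)} := by
  simp only [Qspan, tsum_indicator_card hfin]

lemma Qspan_zero_le {T ε : ℝ} (hfin : (STset f ψ T).Finite) (F : ℕ → Finset X)
    (hF : ∀ n ∈ STset f ψ T, IsSpanningSet f n ε (Xset f ψ T n) (F n)) :
    Qspan f (fun _ => 0) ψ T ε ≤ ∑ n ∈ hfin.toFinset, ((F n).card : ℝ) := by
  rw [Qspan_zero_eq hfin]
  refine csInf_le ⟨0, ?_⟩ ⟨F, hF, rfl⟩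
  rintro _ ⟨F, -, rfl⟩
  positivity

lemma exists_spanning_of_cover {n : ℕ} {δ ε : ℝ} (hε : 0 ≤ ε) (hδε : δ ≤ ε) {Z : Set X}
    {U : Finset (Set X)} (hZ : ∀ x ∈ Z, ∃ u ∈ U, x ∈ u)
    (hU : ∀ u ∈ U, ∀ x ∈ u, ∀ y ∈ u, ∀ i < n, dist (f^[i] x) (f^[i] y) ≤ δ) :
    ∃ F : Finset X, F.card ≤ U.card ∧ IsSpanningSet f n ε Z F := by
  classical
  rcases isEmpty_or_nonempty X with _ | hX
  · exact ⟨∅, by simp, fun y => isEmptyElim y⟩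
  refine ⟨U.image fun u => if h : u.Nonempty then h.some else hX.some, Finset.card_image_le, ?_⟩
  intro y hy
  obtain ⟨u, hu, hyu⟩ := hZ y hy
  have hne : u.Nonempty := ⟨y, hyu⟩
  refine ⟨_, Finset.mem_image_of_mem _ hu, ?_⟩
  rw [dif_pos hne]
  exact dynDist_le hε fun i hi => (hU u hu _ hne.some_mem _ hyu i hi).trans hδε

end BowenBalls

section Comparison

variable [MetricSpace X] {f : X → X} {ψ : X → ℝ}

lemma exists_spanning_card_le {G : Finset (ℕ × X)} {α ε ε' v C m T : ℝ} (hε : 0 < ε)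
    (hε' : 2 * ε ≤ ε') (hα : 0 ≤ α) (hm0 : 0 < m) (hm : ∀ x, m ≤ ψ x) (hv0 : 0 ≤ v)
    (hv : ∀ a b, dist a b ≤ 2 * ε → ψ a ≤ ψ b + v)
    (hG : ∀ p ∈ G, 1 ≤ p.1) (hcov : ∀ x, ∃ p ∈ G, x ∈ BowenBall f p.1 p.2 ε)
    (hC : ∀ p ∈ G, sSup (birkhoff f ψ p.1 '' BowenBall f p.1 p.2 ε) ≤ C)
    (hsum : ∑ p ∈ G, Real.exp (-α * sSup (birkhoff f ψ p.1 '' BowenBall f p.1 p.2 ε)) ≤ 1)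
    (n : ℕ) : ∃ F : Finset X, (F.card : ℝ) ≤ Real.exp (α * (T + n * v + C)) ∧
      IsSpanningSet f n ε' (Xset f ψ T n) F := by
  obtain ⟨U, hU, hUc, hUd⟩ := exists_cover_sublevel hε hα (fun x => hm0.le.trans (hm x)) hv0 hv
    hG hcov hC hsum n T
  obtain ⟨F, hF, hFs⟩ := exists_spanning_of_cover (f := f) (ε := ε') (Z := Xset f ψ T n)
    (by linarith) hε' (fun x hx => hUc x hx.1) hUd
  exact ⟨F, (Nat.cast_le.2 hF).trans hU, hFs⟩

lemma one_le_Qspan_zero [Nonempty X] {m T ε : ℝ} (hm0 : 0 < m) (hm : ∀ x, m ≤ ψ x) (hT : 0 ≤ T)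
    (hspan : ∀ n, ∃ F : Finset X, IsSpanningSet f n ε (Xset f ψ T n) F) :
    1 ≤ Qspan f (fun _ => 0) ψ T ε := by
  have hfin : (STset f ψ T).Finite :=
    (Finset.finite_toSet _).subset (STset_subset_range hm0 hm)
  choose F₀ hF₀ using hspan
  rw [Qspan_zero_eq hfin]
  refine le_csInf ⟨_, F₀, fun n _ => hF₀ n, rfl⟩ ?_
  rintro _ ⟨F, hF, rfl⟩
  obtain ⟨x⟩ := ‹Nonempty X›
  obtain ⟨n, hn⟩ := exists_mem_Xset (f := f) hm0 hm hT x
  have hnS : n ∈ STset f ψ T := ⟨x, hn⟩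
  obtain ⟨y, hy, -⟩ := hF n hnS x hn
  have h₁ : (1 : ℝ) ≤ (F n).card := by
    exact_mod_cast Finset.card_pos.2 ⟨y, hy⟩
  exact h₁.trans (Finset.single_le_sum (f := fun n => ((F n).card : ℝ))
    (fun _ _ => Nat.cast_nonneg _) (hfin.mem_toFinset.2 hnS))

lemma limsup_Qspan_zero_le [Nonempty X] {G : Finset (ℕ × X)} {α ε ε' v m : ℝ} (hε : 0 < ε)
    (hε' : 2 * ε ≤ ε') (hα : 0 ≤ α) (hm0 : 0 < m) (hm : ∀ x, m ≤ ψ x)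
    (hv : ∀ a b, dist a b ≤ 2 * ε → ψ a ≤ ψ b + v)
    (hG : ∀ p ∈ G, 1 ≤ p.1) (hcov : ∀ x, ∃ p ∈ G, x ∈ BowenBall f p.1 p.2 ε)
    (hsum : ∑ p ∈ G, Real.exp (-α * sSup (birkhoff f ψ p.1 '' BowenBall f p.1 p.2 ε)) ≤ 1) :
    limsup (fun T : ℝ => ((T⁻¹ * Real.log (Qspan f (fun _ => 0) ψ T ε') : ℝ) : EReal)) atTop
      ≤ ((α * (1 + v / m) : ℝ) : EReal) := by
  have hv0 : 0 ≤ v := by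
    obtain ⟨x⟩ := ‹Nonempty X›
    have := hv x x (by simpa using hε.le)
    linarith
  obtain ⟨C, hC⟩ := (G.image fun p => sSup (birkhoff f ψ p.1 '' BowenBall f p.1 p.2 ε)).exists_le
  replace hC : ∀ p ∈ G, sSup (birkhoff f ψ p.1 '' BowenBall f p.1 p.2 ε) ≤ C :=
    fun p hp => hC _ (Finset.mem_image_of_mem _ hp)
  have hspan := fun (T : ℝ) (n : ℕ) => exists_spanning_card_le (T := T) hε hε' hα hm0 hm hv0 hv
    hG hcov hC hsum n
  set g : ℝ → ℝ := fun T =>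
    Real.log (T / m + 1) / T + T⁻¹ * (α * C) + α * (1 + v / m) with hg
  have hglim : Tendsto g atTop (𝓝 (α * (1 + v / m))) := by
    have h₁ : Tendsto (fun T : ℝ => T / m + 1) atTop atTop :=
      tendsto_atTop_add_const_right _ _ (tendsto_id.atTop_div_const hm0)
    have h₂ := (Real.tendsto_pow_log_div_mul_add_atTop m (-m) 1 hm0.ne').comp h₁
    have h₃ : Tendsto (fun T : ℝ => Real.log (T / m + 1) / T) atTop (𝓝 0) := by
      refine h₂.congr fun T => ?_
      simp only [Function.comp_apply, pow_one]
      congr 1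
      field_simp
      ring
    have h₄ : Tendsto (fun T : ℝ => T⁻¹ * (α * C)) atTop (𝓝 0) := by
      simpa using tendsto_inv_atTop_zero.mul_const (α * C)
    simpa [hg] using (h₃.add h₄).add_const (α * (1 + v / m))
  have hlim : Tendsto (fun T => ((g T : ℝ) : EReal)) atTop (𝓝 ((α * (1 + v / m) : ℝ) : EReal)) :=
    (continuous_coe_real_ereal.tendsto _).comp hglim
  rw [← hlim.limsup_eq]
  refine limsup_le_limsup ?_
  filter_upwards [eventually_gt_atTop 0] with T hT
  rw [EReal.coe_le_coe_iff]
  choose F hFc hFs using hspan T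
  have hfin : (STset f ψ T).Finite :=
    (Finset.finite_toSet _).subset (STset_subset_range hm0 hm)
  have hcard : (hfin.toFinset.card : ℝ) ≤ T / m + 1 := by
    have h₁ : hfin.toFinset.card ≤ ⌊T / m⌋₊ + 1 := by
      simpa using Finset.card_le_card (hfin.toFinset_subset.2 (STset_subset_range hm0 hm))
    have h₂ : (⌊T / m⌋₊ : ℝ) ≤ T / m := Nat.floor_le (by positivity)
    have h₃ : (hfin.toFinset.card : ℝ) ≤ ⌊T / m⌋₊ + 1 := by exact_mod_cast h₁
    linarith
  have hQ : Qspan f (fun _ => 0) ψ T ε' ≤ (T / m + 1) * Real.exp (α * (T + T / m * v + C)) := by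
    refine (Qspan_zero_le hfin F fun n _ => hFs n).trans ?_
    refine (Finset.sum_le_card_nsmul _ _ (Real.exp (α * (T + T / m * v + C))) fun n hn => ?_).trans
      ?_
    · refine (hFc n).trans (Real.exp_le_exp.2 (mul_le_mul_of_nonneg_left ?_ hα))
      have := (le_div_iff₀ hm0).2 (natCast_mul_le_of_mem_STset hm (hfin.mem_toFinset.1 hn))
      have := mul_le_mul_of_nonneg_right this hv0
      linarith
    · rw [nsmul_eq_mul]
      exact mul_le_mul_of_nonneg_right hcard (Real.exp_pos _).le
  have hQ1 : 1 ≤ Qspan f (fun _ => 0) ψ T ε' :=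
    one_le_Qspan_zero hm0 hm hT.le fun n => ⟨F n, hFs n⟩
  have hlog := Real.log_le_log (by linarith) hQ
  rw [Real.log_mul (by positivity) (Real.exp_pos _).ne', Real.log_exp] at hlog
  calc T⁻¹ * Real.log (Qspan f (fun _ => 0) ψ T ε')
      ≤ T⁻¹ * (Real.log (T / m + 1) + α * (T + T / m * v + C)) :=
        mul_le_mul_of_nonneg_left hlog (by positivity)
    _ = g T := by
        simp only [hg]
        field_simp
        ring

/-- Compactness provides, at every scale, a cover by Bowen balls of order one to which
`exists_cover_sublevel` applies for some exponent. -/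
lemma exists_cover_order_one [CompactSpace X] [Nonempty X] (f : X → X) {ε m M : ℝ} (hε : 0 < ε)
    (hm0 : 0 < m) (hm : ∀ x, m ≤ ψ x) (hM : ∀ x, ψ x ≤ M) :
    ∃ (α : ℝ) (G : Finset (ℕ × X)), 0 ≤ α ∧ (∀ p ∈ G, 1 ≤ p.1) ∧
      (∀ x, ∃ p ∈ G, x ∈ BowenBall f p.1 p.2 ε) ∧
      ∑ p ∈ G, Real.exp (-α * sSup (birkhoff f ψ p.1 '' BowenBall f p.1 p.2 ε)) ≤ 1 := by
  classical
  obtain ⟨t, -, htfin, ht⟩ := finite_cover_balls_of_compact (isCompact_univ (X := X)) hε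
  lift t to Finset X using htfin
  have hne : t.Nonempty := by
    obtain ⟨x⟩ := ‹Nonempty X›
    obtain ⟨c, hc, -⟩ := mem_iUnion₂.1 (ht (mem_univ x))
    exact ⟨c, hc⟩
  have hcard : (1 : ℝ) ≤ t.card := by exact_mod_cast hne.card_pos
  have hα : 0 ≤ Real.log t.card / m := div_nonneg (Real.log_nonneg hcard) hm0.le
  refine ⟨Real.log t.card / m, t.image fun c => (1, c), hα, ?_, ?_, ?_⟩
  · intro p hp
    obtain ⟨c, -, rfl⟩ := Finset.mem_image.1 hp
    exact le_rfl
  · intro x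
    obtain ⟨c, hc, hxc⟩ := mem_iUnion₂.1 (ht (mem_univ x))
    refine ⟨(1, c), Finset.mem_image_of_mem _ hc, ?_⟩
    refine (dynDist_le dist_nonneg fun i hi => ?_).trans_lt (Metric.mem_ball'.1 hxc)
    obtain rfl : i = 0 := by omega
    exact le_rfl
  · rw [Finset.sum_image (by simp)]
    refine (Finset.sum_le_card_nsmul _ _ (Real.exp (-Real.log t.card)) fun c _ => ?_).trans ?_
    · refine Real.exp_le_exp.2 ?_
      have h₁ : m ≤ sSup (birkhoff f ψ 1 '' BowenBall f 1 c ε) := by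
        refine le_csSup_of_le ⟨(1 : ℕ) * M, ?_⟩ (mem_image_of_mem _ (self_mem_bowenBall 1 c hε))
          (by simpa using mul_le_birkhoff (f := f) hm 1 c)
        rintro _ ⟨y, -, rfl⟩
        exact birkhoff_le_mul hM 1 y
      have h₂ := mul_le_mul_of_nonneg_left h₁ hα
      rw [div_mul_cancel₀ _ hm0.ne'] at h₂
      simpa using h₂
    · rw [nsmul_eq_mul, Real.exp_neg, Real.exp_log (by linarith),
        mul_inv_cancel₀ (by linarith)]

lemma nonneg_of_BSm_eq_zero [Nonempty X] {α ε : ℝ} (h0 : ∀ x, 0 ≤ ψ x)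
    (h : BSm f ψ α ε = 0) : 0 ≤ α := by
  by_contra! hα
  have h₁ : (1 : ENNReal) ≤ BSpre f ψ α ε 0 := by
    refine le_iInf₂ fun G hG => ?_
    obtain ⟨x⟩ := ‹Nonempty X›
    obtain ⟨p, hp, -⟩ := mem_iUnion₂.1 (hG.2 (mem_univ x))
    refine le_trans ?_ (Finset.single_le_sum (fun _ _ => zero_le) hp)
    rw [← ENNReal.ofReal_one]
    refine ENNReal.ofReal_le_ofReal (Real.one_le_exp (mul_nonneg (by linarith) ?_))
    refine Real.sSup_nonneg ?_
    rintro _ ⟨y, -, rfl⟩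
    exact Finset.sum_nonneg fun i _ => h0 _
  have h₂ : BSpre f ψ α ε 0 ≤ BSm f ψ α ε := le_iSup (BSpre f ψ α ε) 0
  rw [h] at h₂
  exact absurd (h₁.trans h₂) (by simp)

lemma BSdimAt_nonneg [Nonempty X] {ε : ℝ} (h0 : ∀ x, 0 ≤ ψ x) : 0 ≤ BSdimAt f ψ ε :=
  Real.sInf_nonneg fun _ h => nonneg_of_BSm_eq_zero h0 h

lemma exists_cover_of_BSm_eq_zero {α ε : ℝ} (h : BSm f ψ α ε = 0) :
    ∃ G : Finset (ℕ × X), (∀ p ∈ G, 1 ≤ p.1) ∧ (∀ x, ∃ p ∈ G, x ∈ BowenBall f p.1 p.2 ε) ∧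
      ∑ p ∈ G, Real.exp (-α * sSup (birkhoff f ψ p.1 '' BowenBall f p.1 p.2 ε)) ≤ 1 := by
  have h₁ : BSpre f ψ α ε 1 < 1 := by
    have h₂ : BSpre f ψ α ε 1 ≤ BSm f ψ α ε := le_iSup (BSpre f ψ α ε) 1
    exact (h₂.trans_eq h).trans_lt one_pos
  simp only [BSpre, iInf_lt_iff] at h₁
  obtain ⟨G, hG, hsum⟩ := h₁
  refine ⟨G, hG.1, fun x => ?_, ?_⟩
  · simpa using hG.2 (mem_univ x)
  · rw [← ENNReal.ofReal_sum_of_nonneg fun _ _ => (Real.exp_pos _).le,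
      ENNReal.ofReal_lt_one] at hsum
    exact hsum.le

lemma exists_spanning [CompactSpace X] [Nonempty X] (f : X → X) {ε m M : ℝ} (hε : 0 < ε)
    (hm0 : 0 < m) (hm : ∀ x, m ≤ ψ x) (hM : ∀ x, ψ x ≤ M) (T : ℝ) (n : ℕ) :
    ∃ F : Finset X, IsSpanningSet f n ε (Xset f ψ T n) F := by
  obtain ⟨α, G, hα, hG, hcov, hsum⟩ := exists_cover_order_one f (half_pos hε) hm0 hm hM
  obtain ⟨C, hC⟩ :=
    (G.image fun p => sSup (birkhoff f ψ p.1 '' BowenBall f p.1 p.2 (ε / 2))).exists_le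
  have hM0 : 0 ≤ M := by
    obtain ⟨x⟩ := ‹Nonempty X›
    linarith [hm x, hM x]
  obtain ⟨F, -, hF⟩ := exists_spanning_card_le (f := f) (ψ := ψ) (v := M) (T := T)
    (half_pos hε) (by linarith : 2 * (ε / 2) ≤ ε) hα hm0 hm hM0
    (fun a b _ => by linarith [hm b, hM a]) hG hcov
    (fun p hp => hC _ (Finset.mem_image_of_mem _ hp)) hsum n
  exact ⟨F, hF⟩

lemma BSpre_le_of_Qspan_lt {m M T ε ε' α c : ℝ} (hε : ε < ε') (hα : 0 ≤ α) (hm0 : 0 < m)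
    (hm : ∀ x, m ≤ ψ x) (hM : ∀ x, ψ x ≤ M) (hT : 0 ≤ T) {N : ℕ} (hTN : N * M ≤ T)
    (hspan : ∀ n, ∃ F : Finset X, IsSpanningSet f n ε (Xset f ψ T n) F)
    (hQ : Qspan f (fun _ => 0) ψ T ε < c) :
    BSpre f ψ α ε' N ≤ ENNReal.ofReal (c * Real.exp (-α * (T - M))) := by
  classical
  have hfin : (STset f ψ T).Finite :=
    (Finset.finite_toSet _).subset (STset_subset_range hm0 hm)
  choose F₀ hF₀ using hspan
  rw [Qspan_zero_eq hfin] at hQ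
  obtain ⟨_, ⟨F, hF, rfl⟩, hFc⟩ :=
    exists_lt_of_csInf_lt (by exact ⟨_, F₀, fun n _ => hF₀ n, rfl⟩) hQ
  set G : Finset (ℕ × X) := hfin.toFinset.biUnion fun n =>
    ((F n).filter fun x => (BowenBall f n x ε' ∩ Xset f ψ T n).Nonempty).image fun x => (n, x)
    with hGdef
  have hmem : ∀ p ∈ G, p.1 ∈ STset f ψ T ∧
      (BowenBall f p.1 p.2 ε' ∩ Xset f ψ T p.1).Nonempty := by
    intro p hp
    simp only [hGdef, Finset.mem_biUnion, Finset.mem_image, Finset.mem_filter,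
      Set.Finite.mem_toFinset] at hp
    obtain ⟨n, hn, x, ⟨-, hx⟩, rfl⟩ := hp
    exact ⟨hn, hx⟩
  have hM' : ∀ x n, birkhoff f ψ (n + 1) x ≤ birkhoff f ψ n x + M := by
    intro x n
    rw [birkhoff_add]
    simpa using birkhoff_le_mul (f := f) hM 1 (f^[n] x)
  have hcard : (G.card : ℝ) ≤ c := by
    refine le_trans ?_ hFc.le
    have : G.card ≤ ∑ n ∈ hfin.toFinset, (F n).card :=
      Finset.card_biUnion_le.trans (Finset.sum_le_sum fun n _ =>
        Finset.card_image_le.trans (Finset.card_filter_le _ _))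
    exact_mod_cast this
  suffices hG : (∀ p ∈ G, N ≤ p.1) ∧ univ ⊆ ⋃ p ∈ G, BowenBall f p.1 p.2 ε' by
    refine (iInf₂_le G hG).trans ?_
    rw [← ENNReal.ofReal_sum_of_nonneg fun _ _ => (Real.exp_pos _).le]
    refine ENNReal.ofReal_le_ofReal ?_
    refine (Finset.sum_le_card_nsmul _ _ (Real.exp (-α * (T - M))) fun p hp => ?_).trans ?_
    · obtain ⟨-, y, hyB, hy⟩ := hmem p hp
      have h₁ : birkhoff f ψ p.1 y ≤ sSup (birkhoff f ψ p.1 '' BowenBall f p.1 p.2 ε') := by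
        refine le_csSup ⟨p.1 * M, ?_⟩ (mem_image_of_mem _ hyB)
        rintro _ ⟨z, -, rfl⟩
        exact birkhoff_le_mul hM _ z
      have h₂ := hM' y p.1
      have h₃ := hy.2
      rw [Real.exp_le_exp, neg_mul, neg_mul]
      exact neg_le_neg (mul_le_mul_of_nonneg_left (by linarith) hα)
    · rw [nsmul_eq_mul]
      exact mul_le_mul_of_nonneg_right hcard (Real.exp_pos _).le
  constructor
  · intro p hp
    obtain ⟨⟨x, -, hx⟩, -⟩ := hmem p hp
    have hMpos : 0 < M := by linarith [hm x, hM x]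
    have h₁ : T < ((p.1 + 1 : ℕ) : ℝ) * M := hx.trans_le (birkhoff_le_mul hM _ x)
    have h₂ : (N : ℝ) < ((p.1 + 1 : ℕ) : ℝ) := lt_of_mul_lt_mul_right (hTN.trans_lt h₁) hMpos.le
    exact Nat.lt_succ_iff.1 (by exact_mod_cast h₂)
  · intro y _
    obtain ⟨n, hn⟩ := exists_mem_Xset (f := f) hm0 hm hT y
    have hnS : n ∈ STset f ψ T := ⟨y, hn⟩
    obtain ⟨x, hx, hxy⟩ := hF n hnS y hn
    have hyB : y ∈ BowenBall f n x ε' := hxy.trans_lt hε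
    refine mem_iUnion₂.2 ⟨(n, x), ?_, hyB⟩
    simp only [hGdef, Finset.mem_biUnion, Finset.mem_image, Finset.mem_filter,
      Set.Finite.mem_toFinset]
    exact ⟨n, hnS, x, ⟨hx, y, hyB, hn⟩, rfl⟩

lemma BSm_eq_zero_of_limsup_lt [CompactSpace X] [Nonempty X] {m M ε ε' α : ℝ} (hε0 : 0 < ε)
    (hε : ε < ε') (hm0 : 0 < m) (hm : ∀ x, m ≤ ψ x) (hM : ∀ x, ψ x ≤ M)
    (h : limsup (fun T : ℝ => ((T⁻¹ * Real.log (Qspan f (fun _ => 0) ψ T ε) : ℝ) : EReal)) atTop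
      < (α : EReal)) : BSm f ψ α ε' = 0 := by
  have hspan := exists_spanning f hε0 hm0 hm hM
  have hQ1 : ∀ T : ℝ, 0 ≤ T → 1 ≤ Qspan f (fun _ => 0) ψ T ε :=
    fun T hT => one_le_Qspan_zero hm0 hm hT (hspan T)
  obtain ⟨β, hβ, hβα⟩ := EReal.lt_iff_exists_real_btwn.1 h
  rw [EReal.coe_lt_coe_iff] at hβα
  have hev := eventually_lt_of_limsup_lt hβ
  have hα : 0 ≤ α := by
    obtain ⟨T, hT, hT0⟩ := (hev.and (eventually_gt_atTop 0)).exists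
    rw [EReal.coe_lt_coe_iff] at hT
    have : 0 ≤ T⁻¹ * Real.log (Qspan f (fun _ => 0) ψ T ε) :=
      mul_nonneg (by positivity) (Real.log_nonneg (hQ1 T hT0.le))
    linarith
  refine le_antisymm (iSup_le fun N => ?_) zero_le
  have hlim : Tendsto (fun T : ℝ => ENNReal.ofReal (Real.exp (β * T) * Real.exp (-α * (T - M))))
      atTop (𝓝 0) := by
    rw [← ENNReal.ofReal_zero]
    refine ENNReal.tendsto_ofReal ?_
    have h₁ : Tendsto (fun T : ℝ => α * M + (β - α) * T) atTop atBot :=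
      tendsto_atBot_add_const_left _ _ (tendsto_id.const_mul_atTop_of_neg (by linarith))
    refine (Real.tendsto_exp_atBot.comp h₁).congr fun T => ?_
    rw [← Real.exp_add, Function.comp_apply]
    congr 1
    ring
  refine ge_of_tendsto hlim ?_
  filter_upwards [hev, eventually_gt_atTop 0, eventually_ge_atTop (N * M)] with T hT hT0 hTN
  refine BSpre_le_of_Qspan_lt hε hα hm0 hm hM hT0.le hTN (hspan T) ?_
  rw [EReal.coe_lt_coe_iff, inv_mul_lt_iff₀ hT0, mul_comm,
    Real.log_lt_iff_lt_exp (by linarith [hQ1 T hT0.le])] at hT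
  exact hT

lemma BSm_eq_zero_nonempty [CompactSpace X] [Nonempty X] (f : X → X) {m M ε : ℝ} (hε : 0 < ε)
    (hm0 : 0 < m) (hm : ∀ x, m ≤ ψ x) (hM : ∀ x, ψ x ≤ M) :
    {α : ℝ | BSm f ψ α ε = 0}.Nonempty := by
  obtain ⟨α, G, hα, hG, hcov, hsum⟩ :=
    exists_cover_order_one f (by linarith : 0 < ε / 4) hm0 hm hM
  have h := limsup_Qspan_zero_le (v := M) (ε' := ε / 2) (by linarith) (by linarith) hα hm0 hm
    (fun a b _ => by linarith [hm b, hM a]) hG hcov hsum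
  refine ⟨α * (1 + M / m) + 1, BSm_eq_zero_of_limsup_lt (half_pos hε) (half_lt_self hε) hm0 hm hM
    (h.trans_lt ?_)⟩
  rw [EReal.coe_lt_coe_iff]
  linarith

end Comparison

/-- `P_ψ(0) = dim_BS X`. -/
theorem stmt13 [MetricSpace X] [CompactSpace X] [Nonempty X]
    (f : X → X) (ψ : X → ℝ) (hf : Continuous f) (hψ : Continuous ψ)
    (hpos : ∀ x, 0 < ψ x) :
    inducedPressure f (fun _ => 0) ψ = BSdim f ψ := by
  obtain ⟨x₀, -, hx₀⟩ := isCompact_univ.exists_isMinOn univ_nonempty hψ.continuousOn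
  obtain ⟨x₁, -, hx₁⟩ := isCompact_univ.exists_isMaxOn univ_nonempty hψ.continuousOn
  replace hx₀ : ∀ x, ψ x₀ ≤ ψ x := fun x => hx₀ (mem_univ x)
  replace hx₁ : ∀ x, ψ x ≤ ψ x₁ := fun x => hx₁ (mem_univ x)
  have hm0 := hpos x₀
  have h0 : ∀ x, 0 ≤ ψ x := fun x => (hpos x).le
  apply le_antisymm
  · refine iSup₂_le fun ε hε => ?_
    refine EReal.le_of_forall_lt_iff_le.1 fun z hz => ?_
    obtain ⟨z', hDz', hz'⟩ := EReal.lt_iff_exists_real_btwn.1 hz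
    rw [EReal.coe_lt_coe_iff] at hz'
    have hdim : ∀ δ : ℝ, 0 < δ → BSdimAt f ψ δ < z' := fun δ hδ =>
      EReal.coe_lt_coe_iff.1 ((le_iSup₂ (f := fun (δ : ℝ) (_ : 0 < δ) =>
        ((BSdimAt f ψ δ : ℝ) : EReal)) δ hδ).trans_lt hDz')
    have hz'0 : 0 < z' := (BSdimAt_nonneg h0).trans_lt (hdim 1 one_pos)
    set v := ψ x₀ * ((z - z') / z') with hvdef
    have hv0 : 0 < v := mul_pos hm0 (div_pos (by linarith) hz'0)
    obtain ⟨δ, hδ, hδv⟩ := Metric.uniformContinuous_iff.1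
      (CompactSpace.uniformContinuous_of_continuous hψ) v hv0
    set ρ := min (ε / 2) (δ / 3)
    have hρ : 0 < ρ := lt_min (by linarith) (by linarith)
    have hρ₁ : ρ ≤ ε / 2 := min_le_left _ _
    have hρ₂ : ρ ≤ δ / 3 := min_le_right _ _
    obtain ⟨α, hα, hαz⟩ := exists_lt_of_csInf_lt
      (BSm_eq_zero_nonempty f hρ hm0 hx₀ hx₁) (hdim ρ hρ)
    obtain ⟨G, hG, hcov, hsum⟩ := exists_cover_of_BSm_eq_zero hα
    refine (limsup_Qspan_zero_le (v := v) hρ (by linarith) (nonneg_of_BSm_eq_zero h0 hα) hm0 hx₀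
      (fun a b hab => ?_) hG hcov hsum).trans (EReal.coe_le_coe_iff.2 ?_)
    · have h₁ := hδv (a := a) (b := b) (by linarith)
      rw [Real.dist_eq] at h₁
      linarith [le_abs_self (ψ a - ψ b)]
    · have h₁ : 1 + v / ψ x₀ = z / z' := by
        rw [hvdef]
        field_simp
        ring
      rw [h₁]
      calc α * (z / z') ≤ z' * (z / z') :=
            mul_le_mul_of_nonneg_right hαz.le (div_nonneg (by linarith) hz'0.le)
        _ = z := mul_div_cancel₀ z hz'0.ne'
  · refine iSup₂_le fun ε hε => ?_
    refine le_trans ?_ (le_iSup₂ (f := fun (δ : ℝ) (_ : 0 < δ) =>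
      limsup (fun T : ℝ => ((T⁻¹ * Real.log (Qspan f (fun _ => 0) ψ T δ) : ℝ) : EReal)) atTop)
      (ε / 2) (half_pos hε))
    refine EReal.le_of_forall_lt_iff_le.1 fun z hz => EReal.coe_le_coe_iff.2 ?_
    exact csInf_le ⟨0, fun _ h => nonneg_of_BSm_eq_zero h0 h⟩
      (BSm_eq_zero_of_limsup_lt (half_pos hε) (half_lt_self hε) hm0 hx₀ hx₁ hz)
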